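/- If μ is a Carleson measure for the Dirichlet space 𝒟(ℂ₊), then there exists C(μ) > 0 such that for all a ∈ ℂ₊: ∫_{ℂ₊} ( μ(Q(a) ∩ Q(z)) / (e^{Re z} Re z) )² dz ≤ C(μ) μ(Q(a)). -/

import Mathlib

open MeasureTheory Set
open scoped ENNReal

/-- The Laplace transform. -/
noncomputable def laplace (f : ℝ → ℂ) (z : ℂ) : ℂ :=
  ∫ t in Ioi (0 : ℝ), f t * Complex.exp (-z * t)

/-- The Carleson square centred at `a ∈ ℂ₊`. -/
def carlesonSquare (a : ℂ) : Set ℂ :=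
  {z : ℂ | 0 < z.re ∧ z.re ≤ 2 * a.re ∧ |z.im - a.im| ≤ a.re}

/-!
Let `G(t) = ∫_{Q(a)} e^{-t ζ̄} dμ(ζ)`. Since `∫ G h` is the `μ`-integral over `Q(a)` of a Laplace
transform, the Carleson inequality dualizes to `∫ |G|² / (1 + t) dt ≤ C μ(Q(a))`. On the other hand
`𝔏G(z) = ∫_{Q(a)} dμ(ζ) / (z + ζ̄)`; the integrand has nonnegative real part, which is at least
`1 / (10 Re z)` for `ζ ∈ Q(z)`, so `μ(Q(a) ∩ Q(z)) / (10 Re z) ≤ |𝔏G(z)|`. Finally, Plancherel on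
the vertical lines turns `∫ e^{-2 Re z} |𝔏G(z)|² dz` into `π ∫ |G|² / (1 + t) dt`, because
`2π ∫ e^{-2x(1 + t)} dx = π / (1 + t)`.
-/

open Function Real
open scoped FourierTransform SchwartzMap ContDiff ComplexConjugate NNReal

section CauchySchwarz

variable {X E : Type*} [MeasurableSpace X] [NormedAddCommGroup E]

theorem eLpNorm_two_sq (f : X → E) (μ : Measure X) :
    eLpNorm f 2 μ ^ 2 = ∫⁻ x, ‖f x‖ₑ ^ 2 ∂μ := by
  simpa using eLpNorm_nnreal_pow_eq_lintegral (f := f) (μ := μ) (p := 2) two_ne_zero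

theorem enorm_integral_sq_le [NormedSpace ℝ E] (f : X → E) (μ : Measure X) :
    ‖∫ x, f x ∂μ‖ₑ ^ 2 ≤ μ univ * ∫⁻ x, ‖f x‖ₑ ^ 2 ∂μ := by
  by_cases hf : AEStronglyMeasurable f μ
  · have holder : ‖∫ x, f x ∂μ‖ₑ ≤ eLpNorm f 2 μ * μ univ ^ (1 / 2 : ℝ) :=
      calc ‖∫ x, f x ∂μ‖ₑ ≤ eLpNorm f 1 μ :=
            (enorm_integral_le_lintegral_enorm f).trans_eq eLpNorm_one_eq_lintegral_enorm.symm
        _ ≤ eLpNorm f 2 μ * μ univ ^ (1 / 2 : ℝ) := by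
            convert! eLpNorm_le_eLpNorm_mul_rpow_measure_univ one_le_two hf using 3
            norm_num
    calc ‖∫ x, f x ∂μ‖ₑ ^ 2 ≤ (eLpNorm f 2 μ * μ univ ^ (1 / 2 : ℝ)) ^ 2 := by gcongr
      _ = μ univ * ∫⁻ x, ‖f x‖ₑ ^ 2 ∂μ := by
          rw [mul_pow, eLpNorm_two_sq, ← ENNReal.rpow_mul_natCast, mul_comm]
          norm_num
  · simp [integral_non_aestronglyMeasurable hf]

end CauchySchwarz

section Duality

variable {X Y 𝕜 : Type*} [RCLike 𝕜] [MeasurableSpace X] [MeasurableSpace Y] {σ : Measure X}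
  {ν : Measure Y} [IsFiniteMeasure ν] {k : X → Y → 𝕜} {M : ℝ} {C : ℝ≥0∞}

theorem norm_integral_conj_le_of_norm_le_const (hkM : ∀ᵐ x ∂σ, ∀ᵐ y ∂ν, ‖k x y‖ ≤ M) :
    ∀ᵐ x ∂σ, ‖∫ y, conj (k x y) ∂ν‖ ≤ M * ν.real univ := by
  filter_upwards [hkM] with x hx
  exact norm_integral_le_of_norm_le_const (hx.mono fun y hy ↦ by rwa [RCLike.norm_conj])

theorem integral_integral_conj_mul_eq_integral_sq [IsFiniteMeasure σ]
    (hk : StronglyMeasurable (uncurry k)) (hkM : ∀ᵐ x ∂σ, ∀ᵐ y ∂ν, ‖k x y‖ ≤ M) :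
    ∫ y, ∫ x, (∫ y', conj (k x y') ∂ν) * k x y ∂σ ∂ν =
      ((∫ x, ‖∫ y, conj (k x y) ∂ν‖ ^ 2 ∂σ : ℝ) : 𝕜) := by
  set G : X → 𝕜 := fun x ↦ ∫ y, conj (k x y) ∂ν
  have hG : StronglyMeasurable G :=
    (RCLike.continuous_conj.comp_stronglyMeasurable hk).integral_prod_right'
  have hkM' : ∀ᵐ p ∂σ.prod ν, ‖k p.1 p.2‖ ≤ M :=
    (Measure.ae_prod_iff_ae_ae (measurableSet_le hk.norm.measurable measurable_const)).2 hkM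
  have hGM : ∀ᵐ p ∂σ.prod ν, ‖G p.1‖ ≤ M * ν.real univ :=
    Measure.quasiMeasurePreserving_fst.ae (norm_integral_conj_le_of_norm_le_const hkM)
  have hint : Integrable (uncurry fun x y ↦ G x * k x y) (σ.prod ν) := by
    refine .of_bound ((hG.comp_measurable measurable_fst).mul hk).aestronglyMeasurable
      (M * ν.real univ * M) ?_
    filter_upwards [hkM', hGM] with p hp hGp
    simp only [uncurry, norm_mul]
    exact mul_le_mul hGp hp (norm_nonneg _) ((norm_nonneg _).trans hGp)
  rw [← integral_integral_swap hint, ← integral_ofReal (𝕜 := 𝕜)]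
  congr with x
  have hconj : ∫ y, k x y ∂ν = conj (G x) := by simp [G, ← integral_conj]
  rw [integral_const_mul, hconj, RCLike.mul_conj, RCLike.ofReal_pow]

theorem lintegral_enorm_integral_conj_sq_le_of_isFiniteMeasure [IsFiniteMeasure σ]
    (hk : StronglyMeasurable (uncurry k)) (hkM : ∀ᵐ x ∂σ, ∀ᵐ y ∂ν, ‖k x y‖ ≤ M)
    (hC : ∫⁻ y, ‖∫ x, (∫ y', conj (k x y') ∂ν) * k x y ∂σ‖ₑ ^ 2 ∂ν ≤
      C * ∫⁻ x, ‖∫ y, conj (k x y) ∂ν‖ₑ ^ 2 ∂σ) :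
    ∫⁻ x, ‖∫ y, conj (k x y) ∂ν‖ₑ ^ 2 ∂σ ≤ C * ν univ := by
  set G : X → 𝕜 := fun x ↦ ∫ y, conj (k x y) ∂ν
  have hG : StronglyMeasurable G :=
    (RCLike.continuous_conj.comp_stronglyMeasurable hk).integral_prod_right'
  have hG2 : MemLp G 2 σ :=
    .of_bound hG.aestronglyMeasurable _ (norm_integral_conj_le_of_norm_le_const hkM)
  set I := ∫⁻ x, ‖G x‖ₑ ^ 2 ∂σ with hI
  have hI_top : I ≠ ⊤ := by
    rw [hI, ← eLpNorm_two_sq]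
    exact ENNReal.pow_ne_top hG2.eLpNorm_ne_top
  have pairing : ‖∫ y, ∫ x, G x * k x y ∂σ ∂ν‖ₑ = I := by
    rw [integral_integral_conj_mul_eq_integral_sq hk hkM, ← ofReal_norm, RCLike.norm_ofReal,
      abs_of_nonneg (integral_nonneg fun x ↦ by positivity),
      ofReal_integral_eq_lintegral_ofReal hG2.norm.integrable_sq (ae_of_all _ fun x ↦ sq_nonneg _)]
    simp_rw [ENNReal.ofReal_pow (norm_nonneg _), ofReal_norm]
    rfl
  -- Testing on `G` itself gives a quadratic inequality, from which the finite `I` cancels.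
  have self_bound : I * I ≤ C * ν univ * I :=
    calc I * I = ‖∫ y, ∫ x, G x * k x y ∂σ ∂ν‖ₑ ^ 2 := by rw [pairing, sq]
      _ ≤ ν univ * ∫⁻ y, ‖∫ x, G x * k x y ∂σ‖ₑ ^ 2 ∂ν := enorm_integral_sq_le _ _
      _ ≤ ν univ * (C * I) := by gcongr
      _ = C * ν univ * I := by ring
  rcases eq_or_ne I 0 with h0 | h0
  · simp [h0]
  · exact (ENNReal.mul_le_mul_iff_left h0 hI_top).1 self_bound

theorem lintegral_enorm_integral_conj_sq_le [SigmaFinite σ]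
    (hk : StronglyMeasurable (uncurry k)) (hkM : ∀ᵐ x ∂σ, ∀ᵐ y ∂ν, ‖k x y‖ ≤ M)
    (hC : ∀ h : X → 𝕜, StronglyMeasurable h →
      ∫⁻ y, ‖∫ x, h x * k x y ∂σ‖ₑ ^ 2 ∂ν ≤ C * ∫⁻ x, ‖h x‖ₑ ^ 2 ∂σ) :
    ∫⁻ x, ‖∫ y, conj (k x y) ∂ν‖ₑ ^ 2 ∂σ ≤ C * ν univ := by
  set G : X → 𝕜 := fun x ↦ ∫ y, conj (k x y) ∂ν
  have hG : StronglyMeasurable G :=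
    (RCLike.continuous_conj.comp_stronglyMeasurable hk).integral_prod_right'
  rw [← setLIntegral_univ, ← iUnion_spanningSets σ,
    setLIntegral_iUnion_of_directed _ (monotone_spanningSets σ).directed_le]
  refine iSup_le fun n ↦ ?_
  have hS : MeasurableSet (spanningSets σ n) := measurableSet_spanningSets σ n
  have : IsFiniteMeasure (σ.restrict (spanningSets σ n)) :=
    isFiniteMeasure_restrict.2 (measure_spanningSets_lt_top σ n).ne
  refine lintegral_enorm_integral_conj_sq_le_of_isFiniteMeasure hk (ae_restrict_of_ae hkM) ?_
  convert hC ((spanningSets σ n).indicator G) (hG.indicator hS) using 2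
  · congr! 3 with y
    rw [← integral_indicator hS]
    congr with x
    exact indicator_mul_left _ G (k · y)
  · rw [← lintegral_indicator hS]
    congr with x
    by_cases hx : x ∈ spanningSets σ n <;> simp [hx, G]

end Duality

section Plancherel

variable {V F : Type*} [NormedAddCommGroup V] [InnerProductSpace ℝ V] [FiniteDimensional ℝ V]
  [MeasurableSpace V] [BorelSpace V] [NormedAddCommGroup F] [InnerProductSpace ℂ F] {f : V → F}

theorem continuous_fourier_of_integrable (hf : Integrable f) : Continuous (𝓕 f) :=
  VectorFourier.fourierIntegral_continuous Real.continuous_fourierChar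
    (by exact continuous_inner) hf

variable [CompleteSpace F]

theorem integral_fourier_smul_eq_integral_smul_fourier {g : V → ℂ} (hg : Integrable g)
    (hf : Integrable f) : ∫ ξ, 𝓕 g ξ • f ξ = ∫ x, g x • 𝓕 f x := by
  have h := VectorFourier.integral_fourierIntegral_smul_eq_flip (μ := volume) (ν := volume)
    (L := innerₗ V) Real.continuous_fourierChar (by exact continuous_inner) hg hf
  rwa [flip_innerₗ] at h

theorem fourier_toLp_ae_eq (hf : Integrable f) (hf2 : MemLp f 2) :
    (𝓕 (hf2.toLp f) : Lp (α := V) F 2) =ᵐ[volume] 𝓕 f := by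
  set g : Lp F 2 (volume : Measure V) := hf2.toLp f
  set g_hat : Lp F 2 (volume : Measure V) := 𝓕 g
  refine ae_eq_of_integral_contDiff_smul_eq ((Lp.memLp _).locallyIntegrable one_le_two)
    (continuous_fourier_of_integrable hf).locallyIntegrable fun φ φ_smooth φ_supp ↦ ?_
  have ψ_supp : HasCompactSupport (Complex.ofRealCLM ∘ φ) := φ_supp.comp_left rfl
  set ψ : 𝓢(V, ℂ) := ψ_supp.toSchwartzMap (by fun_prop)
  have distributional : ∫ x, 𝓕 ψ x • g x = ∫ x, ψ x • g_hat x := by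
    have h := DFunLike.congr_fun (Lp.fourier_toTemperedDistribution_eq g) ψ
    simpa only [TemperedDistribution.fourier_apply, Lp.toTemperedDistribution_apply] using h
  calc ∫ x, φ x • g_hat x
      = ∫ x, ψ x • g_hat x := by congr
    _ = ∫ x, 𝓕 ψ x • f x := by
        rw [← distributional]
        refine integral_congr_ae ?_
        filter_upwards [hf2.coeFn_toLp] with x hx
        rw [hx]
    _ = ∫ x, ψ x • 𝓕 f x := integral_fourier_smul_eq_integral_smul_fourier ψ.integrable hf
    _ = ∫ x, φ x • 𝓕 f x := by congr

theorem eLpNorm_fourier_eq (hf : Integrable f) (hf2 : MemLp f 2) :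
    eLpNorm (𝓕 f) 2 volume = eLpNorm f 2 volume := by
  rw [← eLpNorm_congr_ae (fourier_toLp_ae_eq hf hf2), ← eLpNorm_congr_ae hf2.coeFn_toLp]
  exact (ENNReal.toReal_eq_toReal_iff' (Lp.eLpNorm_ne_top _) (Lp.eLpNorm_ne_top _)).1
    (Lp.norm_fourier_eq (hf2.toLp f))

end Plancherel

section LaplaceTransform

variable {f : ℝ → ℂ}

theorem measurable_laplace (hf : AEStronglyMeasurable f (volume.restrict (Ioi 0))) :
    Measurable (laplace f) := by
  have hmk : laplace f = laplace (hf.mk f) := by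
    ext z
    refine integral_congr_ae ?_
    filter_upwards [hf.ae_eq_mk] with t ht
    rw [ht]
  have hjoint : StronglyMeasurable fun p : ℂ × ℝ ↦ hf.mk f p.2 * Complex.exp (-p.1 * p.2) :=
    (hf.stronglyMeasurable_mk.comp_measurable measurable_snd).mul
      (Continuous.stronglyMeasurable (by fun_prop))
  rw [hmk]
  exact hjoint.integral_prod_right'.measurable

theorem laplace_exp_neg_mul {w z : ℂ} (h : 0 < (z + w).re) :
    laplace (fun t ↦ Complex.exp (-w * t)) z = (z + w)⁻¹ := by
  have hexp (t : ℝ) :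
      Complex.exp (-w * t) * Complex.exp (-z * t) = Complex.exp (-(z + w) * t) := by
    rw [← Complex.exp_add]
    ring_nf
  simp_rw [laplace, hexp]
  rw [integral_exp_mul_complex_Ioi (by rwa [Complex.neg_re, neg_lt_zero])]
  simp only [Complex.ofReal_zero, mul_zero, Complex.exp_zero, neg_div_neg_eq, one_div]

theorem laplace_eq_fourier_indicator (f : ℝ → ℂ) (x ξ : ℝ) :
    laplace f ⟨x, 2 * π * ξ⟩ =
      𝓕 ((Ioi 0).indicator fun t : ℝ ↦ f t * Complex.exp (-x * t)) ξ := by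
  rw [Real.fourier_real_eq_integral_exp_smul, laplace, ← integral_indicator measurableSet_Ioi]
  congr with t
  by_cases ht : t ∈ Ioi 0
  · simp only [indicator_of_mem ht]
    rw [smul_eq_mul, mul_left_comm, ← Complex.exp_add]
    congr 2
    apply Complex.ext <;> simp
    ring
  · simp [indicator_of_notMem ht]

theorem lintegral_eq_mul_lintegral_comp_mul_left {c : ℝ} (hc : c ≠ 0) (Φ : ℝ → ℝ≥0∞) :
    ∫⁻ y, Φ y = ENNReal.ofReal |c| * ∫⁻ x, Φ (c * x) := by
  rw [← (measurableEmbedding_mulLeft₀ hc).lintegral_map, ← smul_eq_mul, ← lintegral_smul_measure,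
    Real.smul_map_volume_mul_left hc]

theorem lintegral_enorm_laplace_vertical_sq {x : ℝ}
    (hf : IntegrableOn (fun t : ℝ ↦ f t * Complex.exp (-x * t)) (Ioi 0))
    (hf2 : MemLp (fun t : ℝ ↦ f t * Complex.exp (-x * t)) 2 (volume.restrict (Ioi 0))) :
    ∫⁻ y : ℝ, ‖laplace f ⟨x, y⟩‖ₑ ^ 2 = ENNReal.ofReal (2 * π) *
      ∫⁻ t in Ioi 0, ‖f t‖ₑ ^ 2 * ENNReal.ofReal (Real.exp (-2 * x * t)) := by
  have henorm (t : ℝ) : ‖f t * Complex.exp (-x * t)‖ₑ ^ 2 =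
      ‖f t‖ₑ ^ 2 * ENNReal.ofReal (Real.exp (-2 * x * t)) := by
    rw [enorm_mul, mul_pow, ← ofReal_norm (Complex.exp _), Complex.norm_exp,
      ← ENNReal.ofReal_pow (Real.exp_nonneg _), ← Real.exp_nat_mul]
    simp [mul_assoc]
  rw [lintegral_eq_mul_lintegral_comp_mul_left Real.two_pi_pos.ne',
    abs_of_pos Real.two_pi_pos]
  simp_rw [laplace_eq_fourier_indicator]
  rw [← eLpNorm_two_sq, eLpNorm_fourier_eq ((integrable_indicator_iff measurableSet_Ioi).2 hf)
      ((memLp_indicator_iff_restrict measurableSet_Ioi).2 hf2),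
    eLpNorm_indicator_eq_eLpNorm_restrict measurableSet_Ioi, eLpNorm_two_sq]
  simp_rw [henorm]

theorem measurableSet_re_pos : MeasurableSet {z : ℂ | 0 < z.re} :=
  measurableSet_lt measurable_const Complex.measurable_re

theorem setLIntegral_re_pos {Φ : ℂ → ℝ≥0∞} (hΦ : Measurable Φ) :
    ∫⁻ z in {z : ℂ | 0 < z.re}, Φ z = ∫⁻ x in Ioi (0 : ℝ), ∫⁻ y : ℝ, Φ ⟨x, y⟩ := by
  have hpre : Complex.measurableEquivRealProd.symm ⁻¹' {z : ℂ | 0 < z.re} =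
      Ioi (0 : ℝ) ×ˢ univ := by
    ext p
    simp [Complex.measurableEquivRealProd]
  have hmp := Complex.volume_preserving_equiv_real_prod.symm.restrict_preimage measurableSet_re_pos
  rw [hpre] at hmp
  rw [← hmp.lintegral_comp hΦ, Measure.volume_eq_prod, ← Measure.prod_restrict,
    Measure.restrict_univ, lintegral_prod _ (by fun_prop)]
  simp only [Complex.measurableEquivRealProd_symm_apply]

theorem lintegral_mul_enorm_laplace_sq {ρ : ℝ → ℝ≥0∞} (hρ : Measurable ρ)
    (hfm : AEStronglyMeasurable f (volume.restrict (Ioi 0)))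
    (hf : ∀ x : ℝ, 0 < x → IntegrableOn (fun t : ℝ ↦ f t * Complex.exp (-x * t)) (Ioi 0))
    (hf2 : ∀ x : ℝ, 0 < x →
      MemLp (fun t : ℝ ↦ f t * Complex.exp (-x * t)) 2 (volume.restrict (Ioi 0))) :
    ∫⁻ z in {z : ℂ | 0 < z.re}, ρ z.re * ‖laplace f z‖ₑ ^ 2 = ENNReal.ofReal (2 * π) *
      ∫⁻ t in Ioi 0, ‖f t‖ₑ ^ 2 *
        ∫⁻ x in Ioi (0 : ℝ), ρ x * ENNReal.ofReal (Real.exp (-2 * x * t)) := by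
  have hL : Measurable (laplace f) := measurable_laplace hfm
  calc ∫⁻ z in {z : ℂ | 0 < z.re}, ρ z.re * ‖laplace f z‖ₑ ^ 2
      = ∫⁻ x in Ioi (0 : ℝ), ∫⁻ y : ℝ, ρ x * ‖laplace f ⟨x, y⟩‖ₑ ^ 2 :=
        setLIntegral_re_pos (by fun_prop)
    _ = ∫⁻ x in Ioi (0 : ℝ), ENNReal.ofReal (2 * π) *
          ∫⁻ t in Ioi 0, ρ x * (‖f t‖ₑ ^ 2 * ENNReal.ofReal (Real.exp (-2 * x * t))) := by
        refine setLIntegral_congr_fun measurableSet_Ioi fun x hx ↦ ?_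
        have hvert : Measurable fun y : ℝ ↦ ‖laplace f ⟨x, y⟩‖ₑ ^ 2 := by
          have : Measurable fun y : ℝ ↦ (⟨x, y⟩ : ℂ) :=
            Complex.measurableEquivRealProd.symm.measurable.comp measurable_prodMk_left
          fun_prop
        rw [lintegral_const_mul _ hvert,
          lintegral_enorm_laplace_vertical_sq (hf x hx) (hf2 x hx),
          lintegral_const_mul'' _ (by fun_prop), mul_left_comm]
    _ = ENNReal.ofReal (2 * π) * ∫⁻ t in Ioi 0, ∫⁻ x in Ioi (0 : ℝ),
          ρ x * (‖f t‖ₑ ^ 2 * ENNReal.ofReal (Real.exp (-2 * x * t))) := by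
        rw [lintegral_const_mul' _ _ ENNReal.ofReal_ne_top, lintegral_lintegral_swap]
        have := hfm.comp_snd (μ := volume.restrict (Ioi (0 : ℝ)))
        fun_prop
    _ = _ := by
        congr! 3 with t
        rw [← lintegral_const_mul _ (by fun_prop)]
        simp_rw [mul_left_comm]

end LaplaceTransform

section DualLaplace

/-- The adjoint of the Laplace transform `f ↦ laplace f`, viewed as a map into functions on `ν`,
applied to the constant function `1`; it transfers estimates from `L²(ν)` to `(0, ∞)`. -/
noncomputable def dualLaplace (ν : Measure ℂ) (t : ℝ) : ℂ :=
  ∫ ζ, Complex.exp (-(conj ζ) * t) ∂ν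

theorem norm_exp_neg_mul_le_one {z : ℂ} {t : ℝ} (hz : 0 ≤ z.re) (ht : 0 ≤ t) :
    ‖Complex.exp (-z * t)‖ ≤ 1 := by
  rw [Complex.norm_exp, Complex.re_mul_ofReal, Complex.neg_re, Real.exp_le_one_iff]
  exact mul_nonpos_of_nonpos_of_nonneg (neg_nonpos.2 hz) ht

theorem re_inv_add_conj (z ζ : ℂ) :
    ((z + conj ζ)⁻¹).re = (z.re + ζ.re) / ((z.re + ζ.re) ^ 2 + (z.im - ζ.im) ^ 2) := by
  simp [Complex.inv_re, Complex.normSq_apply, sq, sub_eq_add_neg]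

theorem re_inv_add_conj_nonneg {z ζ : ℂ} (hz : 0 ≤ z.re) (hζ : 0 ≤ ζ.re) :
    0 ≤ ((z + conj ζ)⁻¹).re := by
  rw [re_inv_add_conj]
  positivity

theorem inv_ten_mul_re_le_re_inv_add_conj {z ζ : ℂ} (hζ : ζ ∈ carlesonSquare z) :
    (10 * z.re)⁻¹ ≤ ((z + conj ζ)⁻¹).re := by
  obtain ⟨hζ_pos, hζ_le, him⟩ := hζ
  have him_sq : (z.im - ζ.im) ^ 2 ≤ z.re ^ 2 := by
    rw [abs_sub_comm] at him
    exact sq_le_sq' (abs_le.1 him).1 (abs_le.1 him).2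
  have hz : 0 < z.re := by linarith
  rw [re_inv_add_conj, inv_eq_one_div, div_le_div_iff₀ (by positivity) (by positivity)]
  nlinarith

theorem measurableSet_carlesonSquare (a : ℂ) : MeasurableSet (carlesonSquare a) := by
  unfold carlesonSquare
  measurability

variable {ν : Measure ℂ} [IsFiniteMeasure ν]

theorem stronglyMeasurable_dualLaplace : StronglyMeasurable (dualLaplace ν) := by
  have hjoint : Continuous fun p : ℝ × ℂ ↦ Complex.exp (-(conj p.2) * p.1) := by fun_prop
  exact hjoint.stronglyMeasurable.integral_prod_right'

theorem norm_dualLaplace_le (hν : ∀ᵐ ζ ∂ν, 0 ≤ ζ.re) {t : ℝ} (ht : 0 ≤ t) :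
    ‖dualLaplace ν t‖ ≤ ν.real univ := by
  rw [← one_mul (ν.real univ)]
  refine norm_integral_le_of_norm_le_const ?_
  filter_upwards [hν] with ζ hζ
  exact norm_exp_neg_mul_le_one (by simpa using hζ) ht

theorem integrableOn_dualLaplace_mul_exp (hν : ∀ᵐ ζ ∂ν, 0 ≤ ζ.re) {z : ℂ} (hz : 0 < z.re) :
    IntegrableOn (fun t : ℝ ↦ dualLaplace ν t * Complex.exp (-z * t)) (Ioi 0) := by
  refine Integrable.bdd_mul (c := ν.real univ)
    (integrableOn_exp_mul_complex_Ioi (by simpa using hz) 0)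
    stronglyMeasurable_dualLaplace.aestronglyMeasurable ?_
  filter_upwards [ae_restrict_mem measurableSet_Ioi] with t ht
  exact norm_dualLaplace_le hν (mem_Ioi.1 ht).le

theorem memLp_two_dualLaplace_mul_exp (hν : ∀ᵐ ζ ∂ν, 0 ≤ ζ.re) {z : ℂ} (hz : 0 < z.re) :
    MemLp (fun t : ℝ ↦ dualLaplace ν t * Complex.exp (-z * t)) 2 (volume.restrict (Ioi 0)) := by
  have hint := integrableOn_dualLaplace_mul_exp hν hz
  rw [memLp_two_iff_integrable_sq_norm hint.aestronglyMeasurable]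
  simp_rw [sq]
  refine Integrable.bdd_mul (c := ν.real univ) hint.norm hint.aestronglyMeasurable.norm ?_
  filter_upwards [ae_restrict_mem measurableSet_Ioi] with t ht
  rw [norm_norm, norm_mul]
  exact mul_le_of_le_one_right (norm_nonneg _)
    (norm_exp_neg_mul_le_one hz.le (mem_Ioi.1 ht).le) |>.trans
    (norm_dualLaplace_le hν (mem_Ioi.1 ht).le)

theorem integrable_inv_add_conj (hν : ∀ᵐ ζ ∂ν, 0 ≤ ζ.re) {z : ℂ} (hz : 0 < z.re) :
    Integrable (fun ζ ↦ (z + conj ζ)⁻¹) ν := by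
  refine .of_bound (by fun_prop) z.re⁻¹ ?_
  filter_upwards [hν] with ζ hζ
  rw [norm_inv]
  gcongr
  calc z.re ≤ (z + conj ζ).re := by simpa using hζ
    _ ≤ ‖z + conj ζ‖ := Complex.re_le_norm _

theorem laplace_dualLaplace (hν : ∀ᵐ ζ ∂ν, 0 ≤ ζ.re) {z : ℂ} (hz : 0 < z.re) :
    laplace (dualLaplace ν) z = ∫ ζ, (z + conj ζ)⁻¹ ∂ν := by
  have hint : Integrable (uncurry fun (t : ℝ) (ζ : ℂ) ↦
      Complex.exp (-(conj ζ) * t) * Complex.exp (-z * t))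
      ((volume.restrict (Ioi (0 : ℝ))).prod ν) := by
    have hdom : Integrable (fun p : ℝ × ℂ ↦ Complex.exp (-z * p.1))
        ((volume.restrict (Ioi (0 : ℝ))).prod ν) :=
      (integrableOn_exp_mul_complex_Ioi (by simpa using hz) 0).comp_fst ν
    refine hdom.bdd_mul (c := 1) (Continuous.aestronglyMeasurable (by fun_prop)) ?_
    filter_upwards [Measure.quasiMeasurePreserving_snd.ae hν,
      Measure.quasiMeasurePreserving_fst.ae (ae_restrict_mem measurableSet_Ioi)] with p hζ ht
    exact norm_exp_neg_mul_le_one (by simpa using hζ) (mem_Ioi.1 ht).le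
  calc laplace (dualLaplace ν) z
      = ∫ t in Ioi (0 : ℝ), ∫ ζ, Complex.exp (-(conj ζ) * t) * Complex.exp (-z * t) ∂ν := by
        simp_rw [laplace, dualLaplace, integral_mul_const]
    _ = ∫ ζ, laplace (fun t ↦ Complex.exp (-(conj ζ) * t)) z ∂ν := integral_integral_swap hint
    _ = ∫ ζ, (z + conj ζ)⁻¹ ∂ν := by
        refine integral_congr_ae ?_
        filter_upwards [hν] with ζ hζ
        exact laplace_exp_neg_mul (by simpa using add_pos_of_pos_of_nonneg hz hζ)

theorem measureReal_carlesonSquare_div_le_norm_laplace_dualLaplace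
    (hν : ∀ᵐ ζ ∂ν, 0 ≤ ζ.re) {z : ℂ} (hz : 0 < z.re) :
    ν.real (carlesonSquare z) / (10 * z.re) ≤ ‖laplace (dualLaplace ν) z‖ := by
  have hint : Integrable (fun ζ ↦ ((z + conj ζ)⁻¹).re) ν := (integrable_inv_add_conj hν hz).re
  calc ν.real (carlesonSquare z) / (10 * z.re)
      = ∫ _ in carlesonSquare z, (10 * z.re)⁻¹ ∂ν := by
        rw [setIntegral_const, smul_eq_mul, div_eq_mul_inv]
    _ ≤ ∫ ζ in carlesonSquare z, ((z + conj ζ)⁻¹).re ∂ν :=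
        setIntegral_mono_on (integrable_const _) hint.integrableOn
          (measurableSet_carlesonSquare z) fun ζ hζ ↦ inv_ten_mul_re_le_re_inv_add_conj hζ
    _ ≤ ∫ ζ, ((z + conj ζ)⁻¹).re ∂ν := by
        refine setIntegral_le_integral hint ?_
        filter_upwards [hν] with ζ hζ using re_inv_add_conj_nonneg hz.le hζ
    _ = (laplace (dualLaplace ν) z).re := by
        rw [laplace_dualLaplace hν hz]
        exact integral_re (integrable_inv_add_conj hν hz)
    _ ≤ ‖laplace (dualLaplace ν) z‖ := Complex.re_le_norm _

theorem lintegral_mul_measure_carlesonSquare_sq_le {ρ : ℝ → ℝ≥0∞} (hρ : Measurable ρ)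
    (hν : ∀ᵐ ζ ∂ν, 0 ≤ ζ.re) :
    ∫⁻ z in {z : ℂ | 0 < z.re}, ρ z.re *
        (ν (carlesonSquare z) / ENNReal.ofReal (10 * z.re)) ^ 2 ≤
      ENNReal.ofReal (2 * π) * ∫⁻ t in Ioi 0, ‖dualLaplace ν t‖ₑ ^ 2 *
        ∫⁻ x in Ioi (0 : ℝ), ρ x * ENNReal.ofReal (Real.exp (-2 * x * t)) := by
  rw [← lintegral_mul_enorm_laplace_sq hρ stronglyMeasurable_dualLaplace.aestronglyMeasurable
    (fun x hx ↦ integrableOn_dualLaplace_mul_exp hν (by simpa using hx))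
    (fun x hx ↦ memLp_two_dualLaplace_mul_exp hν (by simpa using hx))]
  refine setLIntegral_mono' measurableSet_re_pos fun z hz ↦ ?_
  gcongr
  rw [← ofReal_norm, ← ofReal_measureReal (measure_ne_top ν _),
    ← ENNReal.ofReal_div_of_pos (by simpa using hz)]
  exact ENNReal.ofReal_le_ofReal
    (measureReal_carlesonSquare_div_le_norm_laplace_dualLaplace hν hz)

end DualLaplace

section CarlesonMeasure

/-- `μ` is a Carleson measure, with constant `C`, for the space `𝔏(L²_w(0, ∞))` of Laplace
transforms of functions square integrable against the weight `w`. There is no finiteness condition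
on `f`: if its weighted norm is infinite then the bound holds trivially unless `C = 0`. -/
def IsLaplaceCarleson (w : ℝ → ℝ≥0) (C : ℝ≥0∞) (μ : Measure ℂ) : Prop :=
  ∀ f : ℝ → ℂ, AEStronglyMeasurable f (volume.restrict (Ioi 0)) →
    ∫⁻ z, ‖laplace f z‖ₑ ^ 2 ∂μ ≤ C * ∫⁻ t in Ioi 0, ‖f t‖ₑ ^ 2 * w t

variable {w : ℝ → ℝ≥0} {ρ : ℝ → ℝ≥0∞} {B C : ℝ≥0∞} {μ ν : Measure ℂ} {a : ℂ}

theorem isLaplaceCarleson_toNNReal_of_integrableOn {v : ℝ → ℝ} (hv : Measurable v)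
    (hv0 : ∀ t, 0 < t → 0 ≤ v t) {c : ℝ} (hc : 0 < c)
    (h : ∀ f : ℝ → ℂ, AEStronglyMeasurable f (volume.restrict (Ioi 0)) →
      IntegrableOn (fun t ↦ ‖f t‖ ^ 2 * v t) (Ioi 0) →
      ∫⁻ z, ‖laplace f z‖ₑ ^ 2 ∂μ ≤ ENNReal.ofReal (c * ∫ t in Ioi 0, ‖f t‖ ^ 2 * v t)) :
    IsLaplaceCarleson (fun t ↦ (v t).toNNReal) (ENNReal.ofReal c) μ := by
  intro f hf
  have hnonneg : 0 ≤ᵐ[volume.restrict (Ioi 0)] fun t ↦ ‖f t‖ ^ 2 * v t := by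
    filter_upwards [ae_restrict_mem measurableSet_Ioi] with t ht
    exact mul_nonneg (sq_nonneg _) (hv0 t ht)
  have hnorm : ∫⁻ t in Ioi 0, ‖f t‖ₑ ^ 2 * (v t).toNNReal =
      ∫⁻ t in Ioi 0, ENNReal.ofReal (‖f t‖ ^ 2 * v t) := by
    congr with t
    rw [ENNReal.ofReal_mul (sq_nonneg _), ENNReal.ofReal_pow (norm_nonneg _), ofReal_norm]
    rfl
  rw [hnorm]
  by_cases hfin : ∫⁻ t in Ioi 0, ENNReal.ofReal (‖f t‖ ^ 2 * v t) = ⊤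
  · rw [hfin, ENNReal.mul_top (ENNReal.ofReal_pos.2 hc).ne']
    exact le_top
  · have hint : IntegrableOn (fun t ↦ ‖f t‖ ^ 2 * v t) (Ioi 0) :=
      ⟨by fun_prop, (hasFiniteIntegral_iff_ofReal hnonneg).2 (lt_top_iff_ne_top.2 hfin)⟩
    rw [← ofReal_integral_eq_lintegral_ofReal hint hnonneg, ← ENNReal.ofReal_mul hc.le]
    exact h f hf hint

namespace IsLaplaceCarleson

theorem mono_measure (h : IsLaplaceCarleson w C μ) (hν : ν ≤ μ) : IsLaplaceCarleson w C ν :=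
  fun f hf ↦ (lintegral_mono' hν le_rfl).trans (h f hf)

theorem lintegral_enorm_dualLaplace_sq_le [IsFiniteMeasure ν] (h : IsLaplaceCarleson w C ν)
    (hw : Measurable w) (hν : ∀ᵐ ζ ∂ν, 0 ≤ ζ.re) :
    ∫⁻ t in Ioi 0, ‖dualLaplace ν t‖ₑ ^ 2 * ((w t)⁻¹ : ℝ≥0) ≤ C * ν univ := by
  set σ := (volume.restrict (Ioi (0 : ℝ))).withDensity fun t ↦ ((w t)⁻¹ : ℝ≥0)
  have hσ (Φ : ℝ → ℝ≥0∞) (hΦ : Measurable Φ) :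
      ∫⁻ t, Φ t ∂σ = ∫⁻ t in Ioi 0, Φ t * ((w t)⁻¹ : ℝ≥0) := by
    rw [lintegral_withDensity_eq_lintegral_mul _ (by fun_prop) hΦ]
    simp_rw [Pi.mul_apply, mul_comm]
  have hpos : ∀ᵐ t ∂σ, 0 < t :=
    (withDensity_absolutelyContinuous _ _).ae_le (ae_restrict_mem measurableSet_Ioi)
  have hconj (t : ℝ) : dualLaplace ν t = ∫ ζ, conj (Complex.exp (-ζ * t)) ∂ν := by
    simp [dualLaplace, ← Complex.exp_conj]
  rw [← hσ _ (stronglyMeasurable_dualLaplace.measurable.enorm.pow_const 2)]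
  simp_rw [hconj]
  refine lintegral_enorm_integral_conj_sq_le (M := 1)
    (Continuous.stronglyMeasurable (by fun_prop)) ?_ fun g hg ↦ ?_
  · filter_upwards [hpos] with t ht
    filter_upwards [hν] with ζ hζ using norm_exp_neg_mul_le_one hζ ht.le
  · have hlaplace (z : ℂ) :
        ∫ t, g t * Complex.exp (-z * t) ∂σ = laplace (fun t ↦ (w t)⁻¹ • g t) z := by
      rw [integral_withDensity_eq_integral_smul (by fun_prop)]
      simp_rw [laplace, smul_mul_assoc]
    simp_rw [hlaplace]
    refine (h _ (hw.inv.stronglyMeasurable.smul hg).aestronglyMeasurable).trans ?_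
    rw [hσ _ (hg.measurable.enorm.pow_const 2)]
    gcongr C * ?_
    refine lintegral_mono fun t ↦ le_of_eq ?_
    have hcancel : (w t)⁻¹ ^ 2 * w t = (w t)⁻¹ := by
      rcases eq_or_ne (w t) 0 with h0 | h0
      · simp [h0]
      · field_simp
    calc ‖(w t)⁻¹ • g t‖ₑ ^ 2 * w t = ‖g t‖ₑ ^ 2 * ((w t)⁻¹ ^ 2 * w t : ℝ≥0) := by
          rw [NNReal.smul_def, enorm_smul, Real.enorm_of_nonneg (by positivity),
            ENNReal.ofReal_coe_nnreal]
          push_cast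
          ring
      _ = ‖g t‖ₑ ^ 2 * ((w t)⁻¹ : ℝ≥0) := by rw [hcancel]

theorem measure_carlesonSquare_ne_top (h : IsLaplaceCarleson w C μ) (hC : C ≠ ⊤) (ha : 0 < a.re)
    (hw : ∫⁻ t in Ioi 0, ENNReal.ofReal (Real.exp (-2 * a.re * t)) * w t ≠ ⊤) :
    μ (carlesonSquare a) ≠ ⊤ := by
  set f : ℝ → ℂ := fun t ↦ Complex.exp (-(conj a) * t)
  have hf : AEStronglyMeasurable f (volume.restrict (Ioi 0)) :=
    Continuous.aestronglyMeasurable (by fun_prop)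
  have hf_sq (t : ℝ) : ‖f t‖ₑ ^ 2 = ENNReal.ofReal (Real.exp (-2 * a.re * t)) := by
    rw [← ofReal_norm, Complex.norm_exp, ← ENNReal.ofReal_pow (Real.exp_nonneg _),
      ← Real.exp_nat_mul]
    simp [mul_assoc]
  have hlower : carlesonSquare a ⊆
      {z | ENNReal.ofReal (10 * a.re)⁻¹ ^ 2 ≤ ‖laplace f z‖ₑ ^ 2} := by
    intro z hz
    rw [mem_ofPred_eq, laplace_exp_neg_mul (by simpa using add_pos hz.1 ha), ← ofReal_norm]
    gcongr
    calc (10 * a.re)⁻¹ ≤ ((a + conj z)⁻¹).re := inv_ten_mul_re_le_re_inv_add_conj hz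
      _ ≤ ‖(a + conj z)⁻¹‖ := Complex.re_le_norm _
      _ = ‖(z + conj a)⁻¹‖ := by
          rw [← RCLike.norm_conj, map_inv₀, map_add, Complex.conj_conj, add_comm]
  have hupper : ∫⁻ z, ‖laplace f z‖ₑ ^ 2 ∂μ ≠ ⊤ := by
    refine ne_top_of_le_ne_top (ENNReal.mul_ne_top hC hw) ((h f hf).trans_eq ?_)
    simp_rw [hf_sq]
  refine ne_top_of_le_ne_top ?_ ((measure_mono hlower).trans (meas_ge_le_lintegral_div
    ((measurable_laplace hf).enorm.pow_const 2).aemeasurable ?_ (by finiteness)))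
  · exact ENNReal.div_ne_top hupper (by simpa using ha)
  · simpa using ha

theorem lintegral_mul_measure_inter_sq_le (h : IsLaplaceCarleson w C μ) (hw : Measurable w)
    (hρ : Measurable ρ)
    (hρw : ∀ t, 0 < t → ENNReal.ofReal (2 * π) *
      ∫⁻ x in Ioi (0 : ℝ), ρ x * ENNReal.ofReal (Real.exp (-2 * x * t)) ≤ B * ((w t)⁻¹ : ℝ≥0))
    (ha : μ (carlesonSquare a) ≠ ⊤) :
    ∫⁻ z in {z : ℂ | 0 < z.re}, ρ z.re *
        (μ (carlesonSquare a ∩ carlesonSquare z) / ENNReal.ofReal (10 * z.re)) ^ 2 ≤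
      B * C * μ (carlesonSquare a) := by
  set ν := μ.restrict (carlesonSquare a)
  have : IsFiniteMeasure ν := isFiniteMeasure_restrict.2 ha
  have hν : ∀ᵐ ζ ∂ν, 0 ≤ ζ.re := by
    filter_upwards [ae_restrict_mem (measurableSet_carlesonSquare a)] with ζ hζ using hζ.1.le
  have hν_square (z : ℂ) :
      ν (carlesonSquare z) = μ (carlesonSquare a ∩ carlesonSquare z) := by
    rw [Measure.restrict_apply (measurableSet_carlesonSquare z), inter_comm]
  simp_rw [← hν_square]
  calc ∫⁻ z in {z : ℂ | 0 < z.re}, ρ z.re *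
        (ν (carlesonSquare z) / ENNReal.ofReal (10 * z.re)) ^ 2
      ≤ ENNReal.ofReal (2 * π) * ∫⁻ t in Ioi 0, ‖dualLaplace ν t‖ₑ ^ 2 *
          ∫⁻ x in Ioi (0 : ℝ), ρ x * ENNReal.ofReal (Real.exp (-2 * x * t)) :=
        lintegral_mul_measure_carlesonSquare_sq_le hρ hν
    _ ≤ B * ∫⁻ t in Ioi 0, ‖dualLaplace ν t‖ₑ ^ 2 * ((w t)⁻¹ : ℝ≥0) := by
        have := stronglyMeasurable_dualLaplace (ν := ν).measurable
        rw [← lintegral_const_mul' _ _ ENNReal.ofReal_ne_top, ← lintegral_const_mul _ (by fun_prop)]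
        refine setLIntegral_mono' measurableSet_Ioi fun t ht ↦ ?_
        rw [mul_left_comm, mul_left_comm B]
        gcongr _ * ?_
        exact hρw t ht
    _ ≤ B * (C * ν univ) := by
        gcongr
        exact (h.mono_measure Measure.restrict_le_self).lintegral_enorm_dualLaplace_sq_le hw hν
    _ = B * C * μ (carlesonSquare a) := by rw [Measure.restrict_apply_univ, mul_assoc]

end IsLaplaceCarleson

end CarlesonMeasure

section Dirichlet

theorem lintegral_exp_neg_mul_Ioi {c : ℝ} (hc : 0 < c) :
    ∫⁻ x in Ioi (0 : ℝ), ENNReal.ofReal (Real.exp (-c * x)) = ENNReal.ofReal c⁻¹ := by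
  rw [← ofReal_integral_eq_lintegral_ofReal (integrableOn_exp_mul_Ioi (by linarith) 0)
      (ae_of_all _ fun x ↦ Real.exp_nonneg _),
    integral_exp_mul_Ioi (by linarith)]
  simp

theorem two_pi_mul_lintegral_exp_mul_exp {t : ℝ} (ht : 0 < t) :
    ENNReal.ofReal (2 * π) * ∫⁻ x in Ioi (0 : ℝ),
      ENNReal.ofReal (Real.exp (-2 * x)) * ENNReal.ofReal (Real.exp (-2 * x * t)) =
      ENNReal.ofReal π * ((1 + t).toNNReal⁻¹ : ℝ≥0) := by
  have hexp (x : ℝ) :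
      ENNReal.ofReal (Real.exp (-2 * x)) * ENNReal.ofReal (Real.exp (-2 * x * t)) =
        ENNReal.ofReal (Real.exp (-(2 * (1 + t)) * x)) := by
    rw [← ENNReal.ofReal_mul (Real.exp_nonneg _), ← Real.exp_add]
    ring_nf
  simp_rw [hexp]
  rw [lintegral_exp_neg_mul_Ioi (by positivity), ← Real.toNNReal_inv]
  change _ = ENNReal.ofReal π * ENNReal.ofReal (1 + t)⁻¹
  rw [← ENNReal.ofReal_mul (by positivity), ← ENNReal.ofReal_mul (by positivity)]
  congr 1
  field_simp

theorem lintegral_exp_mul_one_add_ne_top {c : ℝ} (hc : 0 < c) :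
    ∫⁻ t in Ioi 0, ENNReal.ofReal (Real.exp (-c * t)) * (1 + t).toNNReal ≠ ⊤ := by
  have hint : IntegrableOn (fun t ↦ Real.exp (-c * t) * (1 + t)) (Ioi 0) := by
    have hlin := integrableOn_rpow_mul_exp_neg_mul_rpow (s := 1) (by norm_num) one_pos hc
    have hadd := (integrableOn_exp_mul_Ioi (neg_lt_zero.2 hc) 0).add hlin
    refine hadd.congr_fun (fun t _ ↦ ?_) measurableSet_Ioi
    simp only [Pi.add_apply, Real.rpow_one]
    ring
  have hofReal (t : ℝ) : ENNReal.ofReal (Real.exp (-c * t)) * (1 + t).toNNReal =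
      ENNReal.ofReal (Real.exp (-c * t) * (1 + t)) :=
    (ENNReal.ofReal_mul (Real.exp_nonneg _)).symm
  simp_rw [hofReal]
  exact hint.lintegral_lt_top.ne

theorem IsLaplaceCarleson.lintegral_measure_inter_div_sq_le {C : ℝ≥0∞} {μ : Measure ℂ} {a : ℂ}
    (h : IsLaplaceCarleson (fun t ↦ (1 + t).toNNReal) C μ) (ha : μ (carlesonSquare a) ≠ ⊤) :
    ∫⁻ z in {z : ℂ | 0 < z.re}, (μ (carlesonSquare a ∩ carlesonSquare z) /
        ENNReal.ofReal (Real.exp z.re * z.re)) ^ 2 ≤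
      100 * (ENNReal.ofReal π * C * μ (carlesonSquare a)) := by
  refine le_trans ?_ (mul_le_mul_right (h.lintegral_mul_measure_inter_sq_le (by fun_prop)
    (ρ := fun x ↦ ENNReal.ofReal (Real.exp (-2 * x))) (by fun_prop)
    (fun t ht ↦ (two_pi_mul_lintegral_exp_mul_exp ht).le) ha) 100)
  rw [← lintegral_const_mul' _ _ (by finiteness)]
  refine setLIntegral_mono' measurableSet_re_pos fun z (hz : 0 < z.re) ↦ le_of_eq ?_
  have hm : μ (carlesonSquare a ∩ carlesonSquare z) ≠ ⊤ :=
    measure_ne_top_of_subset inter_subset_left ha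
  rw [← ENNReal.ofReal_toReal hm, ← ENNReal.ofReal_div_of_pos (by positivity),
    ← ENNReal.ofReal_div_of_pos (by positivity), ← ENNReal.ofReal_pow (by positivity),
    ← ENNReal.ofReal_pow (by positivity), ← ENNReal.ofReal_mul (by positivity),
    ← ENNReal.ofReal_ofNat 100, ← ENNReal.ofReal_mul (by positivity), neg_mul, Real.exp_neg,
    two_mul, Real.exp_add]
  congr 1
  field_simp
  norm_num

theorem integral_toReal_le_toReal_of_lintegral_le {X : Type*} [MeasurableSpace X] {μ : Measure X}
    {g : X → ℝ≥0∞} {B : ℝ≥0∞} (hB : B ≠ ⊤) (hg : ∫⁻ x, g x ∂μ ≤ B) :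
    ∫ x, (g x).toReal ∂μ ≤ B.toReal :=
  calc ∫ x, (g x).toReal ∂μ ≤ ‖∫ x, (g x).toReal ∂μ‖ := Real.le_norm_self _
    _ = ‖∫ x, (g x).toReal ∂μ‖ₑ.toReal := (toReal_enorm _).symm
    _ ≤ B.toReal := ENNReal.toReal_mono hB <|
        (enorm_integral_le_lintegral_enorm _).trans <| le_trans (lintegral_mono fun x ↦ by
          rw [Real.enorm_of_nonneg ENNReal.toReal_nonneg]
          exact ENNReal.ofReal_toReal_le) hg

end Dirichlet

/-- If `μ` is a Carleson measure for the Dirichlet space `𝒟(ℂ₊)`, then there is `C' > 0`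
such that for all `a ∈ ℂ₊`:
`∫_{ℂ₊} ( μ(Q(a) ∩ Q(z)) / (e^{Re z} Re z) )² dz ≤ C' μ(Q(a))`. -/
theorem stmt_13 (μ : Measure ℂ) (hμ : μ {z : ℂ | ¬ 0 < z.re} = 0)
    (C : ℝ) (hC : 0 < C)
    (hCarleson : ∀ f : ℝ → ℂ,
      AEStronglyMeasurable f (volume.restrict (Ioi (0 : ℝ))) →
      IntegrableOn (fun t => ‖f t‖ ^ 2 * (1 + t)) (Ioi (0 : ℝ)) volume →
      ∫⁻ z in {z : ℂ | 0 < z.re}, ‖laplace f z‖₊ ^ 2 ∂μ ≤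
        ENNReal.ofReal (C * ∫ t in Ioi (0 : ℝ), ‖f t‖ ^ 2 * (1 + t))) :
    ∃ C' : ℝ, 0 < C' ∧ ∀ a : ℂ, 0 < a.re →
      ∫ z in {z : ℂ | 0 < z.re},
          ((μ (carlesonSquare a ∩ carlesonSquare z)).toReal /
            (Real.exp z.re * z.re)) ^ 2 ≤
        C' * (μ (carlesonSquare a)).toReal := by
  have hμ_pos : ∀ᵐ z ∂μ, z ∈ {z : ℂ | 0 < z.re} := ae_iff.2 hμ
  rw [Measure.restrict_eq_self_of_ae_mem hμ_pos] at hCarleson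
  have hμC : IsLaplaceCarleson (fun t ↦ (1 + t).toNNReal) (ENNReal.ofReal C) μ :=
    isLaplaceCarleson_toNNReal_of_integrableOn (by fun_prop) (fun t ht ↦ by positivity) hC hCarleson
  refine ⟨100 * (π * C), by positivity, fun a ha ↦ ?_⟩
  have hfin : μ (carlesonSquare a) ≠ ⊤ :=
    hμC.measure_carlesonSquare_ne_top ENNReal.ofReal_ne_top ha <| by
      simpa only [neg_mul] using lintegral_exp_mul_one_add_ne_top (mul_pos two_pos ha)
  have hbound := integral_toReal_le_toReal_of_lintegral_le (by finiteness)
    (hμC.lintegral_measure_inter_div_sq_le hfin)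
  simp only [ENNReal.toReal_pow, ENNReal.toReal_div, ENNReal.toReal_mul, ENNReal.toReal_ofNat,
    ENNReal.toReal_ofReal pi_pos.le, ENNReal.toReal_ofReal hC.le, ← mul_assoc] at hbound ⊢
  refine (setIntegral_congr_fun measurableSet_re_pos fun z (hz : 0 < z.re) ↦ ?_).trans_le hbound
  rw [ENNReal.toReal_ofReal (by positivity)]
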